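/- Let A : Matrix (Fin n) (Fin n) ℝ. Define lev₀ : Fin n → Fin n → ℕ∞ by lev₀ i j = 0 if A i j ≠ 0 and lev₀ i j = ⊤ otherwise, and define lev : Fin n → Fin n → ℕ∞ by the well-founded recursion (on min i j) lev i j = min (lev₀ i j) (⨅ over k with k < i and k < j of (lev i k + lev k j + 1)). Then for all i, j: lev i j ≤ 1 if and only if A i j ≠ 0, or there exists k with k < i, k < j, A i k ≠ 0 and A k j ≠ 0. -/

import Mathlib

/-- Initial level function of the level-of-fill ILU: `0` at the nonzero positions of
`A` and `∞` elsewhere. -/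
noncomputable def lev₀ {n : ℕ} (A : Matrix (Fin n) (Fin n) ℝ) (i j : Fin n) : ℕ∞ :=
  if A i j ≠ 0 then 0 else ⊤

/-- The level-of-fill function, defined by well-founded recursion (on `min i j`):
`lev i j = min (lev₀ i j) (⨅_{k < i, k < j} (lev i k + lev k j + 1))`. -/
noncomputable def lev {n : ℕ} (A : Matrix (Fin n) (Fin n) ℝ) (i j : Fin n) : ℕ∞ :=
  min (lev₀ A i j)
    (⨅ k : {k : Fin n // k < i ∧ k < j}, lev A i k.1 + lev A k.1 j + 1)
termination_by min i.1 j.1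
decreasing_by
  · have h1 : (k.1 : ℕ) < i.1 := k.2.1
    have h2 : (k.1 : ℕ) < j.1 := k.2.2
    omega
  · have h1 : (k.1 : ℕ) < i.1 := k.2.1
    have h2 : (k.1 : ℕ) < j.1 := k.2.2
    omega

theorem iInf_le_iff_exists_le_of_ne_top {ι : Sort*} {α : Type*} [CompleteLinearOrder α]
    [WellFoundedLT α] {f : ι → α} {a : α} (ha : a ≠ ⊤) : ⨅ x, f x ≤ a ↔ ∃ x, f x ≤ a := by
  refine ⟨fun h => ?_, fun ⟨x, hx⟩ => iInf_le_of_le x hx⟩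
  obtain ⟨x₀, -⟩ : ∃ x, f x < ⊤ := iInf_lt_iff.mp (h.trans_lt ha.lt_top)
  have : Nonempty ι := ⟨x₀⟩
  obtain ⟨x, hx⟩ : ∃ x, f x = ⨅ x, f x := ciInf_mem f
  exact ⟨x, hx.trans_le h⟩

theorem enat_add_add_one_le_one_iff {x y : ℕ∞} : x + y + 1 ≤ 1 ↔ x = 0 ∧ y = 0 := by
  calc x + y + 1 ≤ 1
    _ ↔ x + y + 1 ≤ 0 + 1 := by rw [zero_add]
    _ ↔ x + y ≤ 0 := ENat.add_le_add_iff_right ENat.one_ne_top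
    _ ↔ x = 0 ∧ y = 0 := by rw [nonpos_iff_eq_zero, add_eq_zero]

section Level

variable {n : ℕ} (A : Matrix (Fin n) (Fin n) ℝ) (i j : Fin n)

theorem lev₀_le_iff {p : ℕ∞} (hp : p ≠ ⊤) : lev₀ A i j ≤ p ↔ A i j ≠ 0 := by
  by_cases h : A i j = 0 <;> simp [lev₀, h, hp]

theorem lev_le_iff {p : ℕ∞} (hp : p ≠ ⊤) :
    lev A i j ≤ p ↔
      A i j ≠ 0 ∨ ∃ k : Fin n, k < i ∧ k < j ∧ lev A i k + lev A k j + 1 ≤ p := by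
  rw [lev, min_le_iff, lev₀_le_iff A i j hp, iInf_le_iff_exists_le_of_ne_top hp]
  simp only [Subtype.exists, exists_prop, and_assoc]

theorem lev_eq_zero_iff : lev A i j = 0 ↔ A i j ≠ 0 := by
  rw [← nonpos_iff_eq_zero, lev_le_iff A i j ENat.zero_ne_top]
  simp

end Level

/-- Characterization of the positions of level of fill at most `1`: `lev i j ≤ 1` iff
`a_ij ≠ 0` or there is `k < i, j` with `a_ik ≠ 0` and `a_kj ≠ 0`, i.e., in `ILU(1)`
fill-in is permitted by original entries only. -/
theorem lev_le_one_iff {n : ℕ} (A : Matrix (Fin n) (Fin n) ℝ) (i j : Fin n) :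
    lev A i j ≤ 1 ↔
      A i j ≠ 0 ∨ ∃ k : Fin n, k < i ∧ k < j ∧ A i k ≠ 0 ∧ A k j ≠ 0 := by
  simp only [lev_le_iff A i j ENat.one_ne_top, enat_add_add_one_le_one_iff, lev_eq_zero_iff]
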